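/- Let S : ℝ \ {0} → ℝ be given by S(x) = 7 - 1/x, and let τ⁴ := (7 + 3√5)/2. Then the iterated images S^i([7, ∞)) for i = 0, 1, 2, ... are pairwise disjoint subsets of (τ⁴, ∞), and their union equals the open interval (τ⁴, ∞). -/

import Mathlib

/-!
Let `S x = p - 1 / x` with fixed point `τ ≥ 1`. The sets `Bₙ = S^[n] '' (τ, ∞)` decrease and, as `S`
is injective, `Bₙ \ Bₙ₊₁ = S^[n] '' ((τ, ∞) \ S '' (τ, ∞))`. Since `S '' (τ, ∞) = (τ, p)`, these
layers are the sets `S^[n] '' [p, ∞)`, so everything reduces to `⋂ Bₙ = ∅`. In the coordinate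
`u = 1 / (x - τ)`, the map `S` becomes `u ↦ τ² u + τ`, which moves points of `(0, ∞)` up by at least
`τ`. Hence a point of `Bₙ` has coordinate at least `n τ`, and none lies in every `Bₙ`.
-/

open Function Set

section Layers

variable {α : Type*} {B : ℕ → Set α}

theorem pairwise_disjoint_sdiff_succ_of_antitone (hB : Antitone B) :
    Pairwise (Disjoint on fun n => B n \ B (n + 1)) :=
  (pairwise_disjoint_on _).2 fun _ _ hmn =>
    disjoint_sdiff_left.mono_right (sdiff_subset.trans (hB (Nat.succ_le_of_lt hmn)))

theorem iUnion_sdiff_succ_of_antitone (hB : Antitone B) :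
    ⋃ n, B n \ B (n + 1) = B 0 \ ⋂ n, B n := by
  refine Subset.antisymm (iUnion_subset fun n =>
    sdiff_subset_sdiff (hB n.zero_le) (iInter_subset B (n + 1))) ?_
  rintro x ⟨hx₀, hx⟩
  by_contra! hlayer
  have hstep (n : ℕ) (hn : x ∈ B n) : x ∈ B (n + 1) :=
    by_contra fun hn' => hlayer (mem_iUnion_of_mem n ⟨hn, hn'⟩)
  exact hx (mem_iInter.2 (Nat.rec hx₀ hstep))

end Layers

section ImageIterate

variable {α : Type*} {f : α → α} {U : Set α}

theorem antitone_image_iterate (hU : MapsTo f U U) : Antitone fun n => f^[n] '' U := by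
  refine antitone_nat_of_succ_le fun n => ?_
  rw [iterate_succ, image_comp]
  exact image_mono hU.image_subset

theorem image_iterate_sdiff_image (hU : MapsTo f U U) (hf : InjOn f U) (n : ℕ) :
    f^[n] '' (U \ f '' U) = f^[n] '' U \ f^[n + 1] '' U := by
  rw [(hf.iterate hU n).image_sdiff_subset hU.image_subset, iterate_succ, image_comp]

theorem pairwise_disjoint_image_iterate_sdiff_image (hU : MapsTo f U U) (hf : InjOn f U) :
    Pairwise (Disjoint on fun n => f^[n] '' (U \ f '' U)) := by
  simpa only [image_iterate_sdiff_image hU hf] using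
    pairwise_disjoint_sdiff_succ_of_antitone (antitone_image_iterate hU)

theorem iUnion_image_iterate_sdiff_image (hU : MapsTo f U U) (hf : InjOn f U) :
    ⋃ n, f^[n] '' (U \ f '' U) = U \ ⋂ n, f^[n] '' U := by
  simpa only [image_iterate_sdiff_image hU hf, iterate_zero, image_id] using
    iUnion_sdiff_succ_of_antitone (antitone_image_iterate hU)

variable {G : Type*} [AddCommGroup G] [LinearOrder G] [IsOrderedAddMonoid G] {φ : α → G} {c : G}

theorem add_nsmul_le_apply_iterate (hU : MapsTo f U U) (hφ : ∀ x ∈ U, φ x + c ≤ φ (f x))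
    {x : α} (hx : x ∈ U) (n : ℕ) : φ x + n • c ≤ φ (f^[n] x) := by
  induction n with
  | zero => simp
  | succ n ih =>
    calc φ x + (n + 1) • c = φ x + n • c + c := by rw [succ_nsmul, add_assoc]
      _ ≤ φ (f^[n] x) + c := by gcongr
      _ ≤ φ (f (f^[n] x)) := hφ _ (hU.iterate n hx)
      _ = φ (f^[n + 1] x) := by rw [iterate_succ_apply']

theorem iInter_image_iterate_eq_empty [Archimedean G] (hU : MapsTo f U U) (hc : 0 < c)
    (hφ : ∀ x ∈ U, φ x + c ≤ φ (f x)) (hbdd : BddBelow (φ '' U)) :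
    ⋂ n, f^[n] '' U = ∅ := by
  obtain ⟨b, hb⟩ := hbdd
  refine eq_empty_of_forall_notMem fun y hy => ?_
  obtain ⟨n, hn⟩ := exists_lt_nsmul hc (φ y - b)
  obtain ⟨x, hx, rfl⟩ := mem_iInter.1 hy n
  have hbx : b ≤ φ x := hb (mem_image_of_mem φ hx)
  refine (add_nsmul_le_apply_iterate hU hφ hx n).not_gt ?_
  calc φ (f^[n] x) < b + n • c := sub_lt_iff_lt_add'.1 hn
    _ ≤ φ x + n • c := by gcongr

end ImageIterate

section ShiftMap

variable {K : Type*} [Field K]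

/-- The shift symmetry `x ↦ p - 1 / x` with parameter `p`, extended to `0` by the value `p` since
`1 / 0 = 0` in `K`. -/
def shiftMap (p x : K) : K := p - 1 / x

variable {p τ x : K}

theorem shiftMap_injective (p : K) : Injective (shiftMap p) := by
  intro x y hxy
  simpa [shiftMap] using hxy

theorem inv_shiftMap_sub_of_isFixedPt (hfix : IsFixedPt (shiftMap p) τ) (hτ : τ ≠ 0) (hx : x ≠ 0)
    (hxτ : x ≠ τ) : (shiftMap p x - τ)⁻¹ = τ ^ 2 * (x - τ)⁻¹ + τ := by
  have hxτ' : x - τ ≠ 0 := sub_ne_zero.2 hxτ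
  have hdiff : shiftMap p x - τ = (x - τ) / (τ * x) :=
    calc shiftMap p x - τ = shiftMap p x - shiftMap p τ := by rw [hfix.eq]
      _ = (x - τ) / (τ * x) := by
        unfold shiftMap
        field_simp
        ring
  rw [hdiff]
  field_simp
  ring

variable [LinearOrder K] [IsStrictOrderedRing K]

theorem image_shiftMap_Ioi (hτ : 0 < τ) : shiftMap p '' Ioi τ = Ioo (shiftMap p τ) p := by
  have hcomp : shiftMap p = (p - ·) ∘ (·⁻¹) := funext fun x => by simp [shiftMap]
  rw [hcomp, image_comp, image_inv_eq_inv, inv_Ioi₀ hτ, image_const_sub_Ioo, sub_zero, comp_apply]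

theorem lt_of_isFixedPt_shiftMap (hfix : IsFixedPt (shiftMap p) τ) (hτ : 0 < τ) : τ < p := by
  rw [← hfix.eq]
  exact sub_lt_self p (one_div_pos.2 hτ)

theorem Ioi_sdiff_image_shiftMap_Ioi (hfix : IsFixedPt (shiftMap p) τ) (hτ : 0 < τ) :
    Ioi τ \ shiftMap p '' Ioi τ = Ici p := by
  rw [image_shiftMap_Ioi hτ, hfix.eq, ← Ioi_sdiff_Ici, sdiff_sdiff_right_self]
  exact inter_eq_right.2 (Ici_subset_Ioi.2 (lt_of_isFixedPt_shiftMap hfix hτ))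

theorem mapsTo_shiftMap_Ioi (hfix : IsFixedPt (shiftMap p) τ) (hτ : 0 < τ) :
    MapsTo (shiftMap p) (Ioi τ) (Ioi τ) := by
  rw [mapsTo_iff_image_subset, image_shiftMap_Ioi hτ, hfix.eq]
  exact Ioo_subset_Ioi_self

theorem iInter_image_iterate_shiftMap_Ioi [Archimedean K] (hfix : IsFixedPt (shiftMap p) τ)
    (hτ : 1 ≤ τ) : ⋂ n, (shiftMap p)^[n] '' Ioi τ = ∅ := by
  have hτ₀ : 0 < τ := one_pos.trans_le hτ
  have hpos (x : K) (hx : x ∈ Ioi τ) : 0 ≤ (x - τ)⁻¹ := inv_nonneg.2 (sub_nonneg.2 hx.le)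
  refine iInter_image_iterate_eq_empty (φ := fun x => (x - τ)⁻¹) (mapsTo_shiftMap_Ioi hfix hτ₀) hτ₀
    (fun x hx => ?_) ⟨0, forall_mem_image.2 hpos⟩
  calc (x - τ)⁻¹ + τ ≤ τ ^ 2 * (x - τ)⁻¹ + τ := by
        gcongr
        exact le_mul_of_one_le_left (hpos x hx) (one_le_pow₀ hτ)
    _ = (shiftMap p x - τ)⁻¹ :=
        (inv_shiftMap_sub_of_isFixedPt hfix hτ₀.ne' (hτ₀.trans hx).ne' (ne_of_gt hx)).symm

theorem shift_symmetry_decomposition_general [Archimedean K] (hfix : IsFixedPt (shiftMap p) τ)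
    (hτ : 1 ≤ τ) :
    (∀ i j : ℕ, i ≠ j → Disjoint ((shiftMap p)^[i] '' Ici p) ((shiftMap p)^[j] '' Ici p)) ∧
    (∀ i : ℕ, (shiftMap p)^[i] '' Ici p ⊆ Ioi τ) ∧
    ⋃ i : ℕ, (shiftMap p)^[i] '' Ici p = Ioi τ := by
  have hτ₀ : 0 < τ := one_pos.trans_le hτ
  have hmaps := mapsTo_shiftMap_Ioi hfix hτ₀
  have hinj : InjOn (shiftMap p) (Ioi τ) := (shiftMap_injective p).injOn
  have hunion : ⋃ i : ℕ, (shiftMap p)^[i] '' Ici p = Ioi τ := by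
    rw [← Ioi_sdiff_image_shiftMap_Ioi hfix hτ₀, iUnion_image_iterate_sdiff_image hmaps hinj,
      iInter_image_iterate_shiftMap_Ioi hfix hτ, sdiff_empty]
  refine ⟨fun i j hij => ?_, iUnion_subset_iff.1 hunion.subset, hunion⟩
  rw [← Ioi_sdiff_image_shiftMap_Ioi hfix hτ₀]
  exact pairwise_disjoint_image_iterate_sdiff_image hmaps hinj hij

end ShiftMap

theorem isFixedPt_shiftMap_seven : IsFixedPt (shiftMap 7) ((7 + 3 * √5) / 2) := by
  have hsq : √5 ^ 2 = 5 := Real.sq_sqrt (by norm_num)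
  have hne : 7 + 3 * √5 ≠ 0 := by positivity
  unfold IsFixedPt shiftMap
  field_simp
  linear_combination (-9) * hsq

/-- Let `S : ℝ → ℝ` be given by `S x = 7 - 1/x` (defined away from `0`), and let
`τ⁴ := (7 + 3√5)/2`. Then the iterated images `S^[i] '' [7, ∞)` for `i = 0, 1, 2, ...`
are pairwise disjoint subsets of `(τ⁴, ∞)`, and their union equals `(τ⁴, ∞)`. -/
theorem shift_symmetry_decomposition :
    let S : ℝ → ℝ := fun x => 7 - 1 / x
    let τ4 : ℝ := (7 + 3 * Real.sqrt 5) / 2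
    (∀ i j : ℕ, i ≠ j → Disjoint (S^[i] '' Set.Ici 7) (S^[j] '' Set.Ici 7)) ∧
    (∀ i : ℕ, S^[i] '' Set.Ici 7 ⊆ Set.Ioi τ4) ∧
    (⋃ i : ℕ, S^[i] '' Set.Ici 7) = Set.Ioi τ4 := by
  have hτ : 1 ≤ (7 + 3 * √5) / 2 := by linarith [Real.sqrt_nonneg 5]
  exact shift_symmetry_decomposition_general isFixedPt_shiftMap_seven hτ
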